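/- Fix n ≥ 2. For σ : Fin n → Equiv.Perm (Fin k), let H(σ) be the preimage, under the componentwise signature homomorphism from (Fin n → Equiv.Perm (Fin k)) to (Fin n → ℤˣ), of the subgroup of (Fin n → ℤˣ) generated by the n cyclic shifts of the signature tuple i ↦ Equiv.Perm.sign (σ i). Then the sequence k ↦ (Nat.card {σ : Fin n → Equiv.Perm (Fin k) // G_c(σ) = H(σ)} : ℝ) / (k !)^n tends to 1 as k → ∞; that is, the group circularly generated by n uniformly random permutations of k points generically equals A_k^n ⋊ ⟨c sgn_π(σ_0, …, σ_{n−1})⟩, the subgroup of all n-tuples of permutations whose signature tuple lies in the group generated by the cyclic shifts of (sign σ_0, …, sign σ_{n−1}). -/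

import Mathlib

/-- The group circularly generated by a tuple `σ : Fin n → Equiv.Perm (Fin k)`:
the subgroup of the direct product generated by the `n` cyclic shifts of `σ`. -/
def circGen {n k : ℕ} (σ : Fin n → Equiv.Perm (Fin k)) :
    Subgroup (Fin n → Equiv.Perm (Fin k)) :=
  Subgroup.closure (Set.range fun j : Fin n => fun i : Fin n => σ (i + j))

/-- The componentwise signature homomorphism. -/
def signPi (n k : ℕ) : (Fin n → Equiv.Perm (Fin k)) →* (Fin n → ℤˣ) :=
  Pi.monoidHom fun i =>
    Equiv.Perm.sign.comp (Pi.evalMonoidHom (fun _ : Fin n => Equiv.Perm (Fin k)) i)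

/-- `A_k^n ⋊ ⟨c sgn_π(σ)⟩`: the preimage under the componentwise signature
homomorphism of the subgroup of `Fin n → ℤˣ` generated by the cyclic shifts of the
signature tuple of `σ`. -/
def signGroup {n k : ℕ} (σ : Fin n → Equiv.Perm (Fin k)) :
    Subgroup (Fin n → Equiv.Perm (Fin k)) :=
  Subgroup.comap (signPi n k)
    (Subgroup.closure
      (Set.range fun j : Fin n => fun i : Fin n => Equiv.Perm.sign (σ (i + j))))

/-!
Write `K` for the kernel of the signature map on the direct product, a power of the alternating
group. Both groups have the same image under signatures, so they agree as soon as `K` lies in the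
circularly generated group. Because `A_k` is simple, for this it suffices that the `σ i` generate a
group containing `A_k` and that the circularly generated group contains a nontrivial even element
supported on a single coordinate. Both follow if the `σ i` generate a primitive group and, for some
odd prime `p ≤ k / 2`, among all cycles of all the `σ i` exactly one has length divisible by `p`,
and that length is `p`: a suitable power of the tuple is then a single `p`-cycle in one coordinate,
and the theorem of Jordan applies.

Primitivity fails with probability `O(1 / k)`, by a union bound over the invariant subsets and block
systems. For a set of primes `P`, the number of cycles of `σ 0` with length in `P` has mean and
variance controlled by `∑ 1 / p`, so some `p ∈ P` occurs with high probability by Chebyshev's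
inequality; a second cycle of length divisible by some occurring `p` has probability
`O(log k * ∑ 1 / p ^ 2)`. Taking `P` to be the primes between `exp √(log k)` and `k / 2`, roughly,
Chebyshev's bounds on prime numbers make the first sum diverge and the second error vanish.
-/

open Equiv Equiv.Perm MulAction Filter Topology
open scoped BigOperators commutatorElement

section Jordan
variable {α : Type*} [Fintype α] [DecidableEq α]

theorem isThreeCycle_commutator {g h : Perm α} {x : α} (hgh : g.support ∩ h.support = {x}) :
    ⁅g, h⁆.IsThreeCycle := by
  have mem_iff (y : α) : g y ≠ y ∧ h y ≠ y ↔ y = x := by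
    simpa only [Finset.mem_inter, mem_support, Finset.mem_singleton] using
      Finset.ext_iff.mp hgh y
  obtain ⟨hgx, hhx⟩ := (mem_iff x).2 rfl
  have hhhx : h (h x) ≠ h x := fun e => hhx (h.injective e)
  have hghx : g (h x) = h x := by
    by_contra hne
    exact hhx ((mem_iff _).1 ⟨hne, hhhx⟩)
  have hdisj : Disjoint g (swap x (h x) * h) := fun y => by
    rw [or_iff_not_imp_left]
    intro hgy
    have := mem_iff y
    grind [Perm.mul_apply]
  have hcomm : ⁅g, h⁆ = swap (h x) (g x) * swap (h x) x := by
    calc ⁅g, h⁆ = g * swap x (h x) * (swap x (h x) * h) * g⁻¹ * h⁻¹ := by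
          simp only [commutatorElement_def, mul_assoc, swap_mul_self_mul]
      _ = swap (g x) (h x) * (g * (swap x (h x) * h)) * g⁻¹ * h⁻¹ := by
          rw [mul_swap_eq_swap_mul, hghx, mul_assoc _ g]
      _ = swap (h x) (g x) * swap (h x) x := by
          rw [hdisj.commute.eq, swap_comm (g x), swap_comm x]
          group
  rw [hcomm]
  exact isThreeCycle_swap_mul_swap_same (fun e => hgx (g.injective (hghx.trans e) ▸ hghx)) hhx
    hgx

theorem isMultiplyPretransitive_of_isCycle {H : Subgroup (Perm α)} (hH : IsPreprimitive H α)
    {g : Perm α} (hg : g ∈ H) (hc : g.IsCycle) (hp : g.support.card.Prime)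
    (hlt : g.support.card < Fintype.card α) :
    IsMultiplyPretransitive H α (Fintype.card α - g.support.card + 1) := by
  have hcompl : ((g.support : Set α)ᶜ).ncard = Fintype.card α - g.support.card - 1 + 1 := by
    rw [Set.ncard_compl, Set.ncard_coe_finset, Nat.card_eq_fintype_card]
    lia
  have hcard : Nat.card (SubMulAction.ofFixingSubgroup H (g.support : Set α)ᶜ)
      = g.support.card := by
    rw [← Nat.card_eq_fintype_card.trans (Fintype.card_coe g.support)]
    refine Nat.card_congr (Equiv.subtypeEquivRight fun x => ?_)
    rw [SubMulAction.mem_ofFixingSubgroup_iff, Set.notMem_compl_iff, Finset.mem_coe]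
  have := isPretransitive_of_isCycle_mem hc hg
  have hprim : IsPreprimitive (fixingSubgroup H (g.support : Set α)ᶜ)
      (SubMulAction.ofFixingSubgroup H (g.support : Set α)ᶜ) :=
    IsPreprimitive.of_prime_card (by rwa [hcard])
  have h2 := hp.two_le
  have := hH.isMultiplyPreprimitive hcompl (by rw [Nat.card_eq_fintype_card]; lia) hprim
  convert this.isMultiplyPretransitive using 1
  lia

theorem exists_conj_support_inter_eq_singleton {H : Subgroup (Perm α)} {g : Perm α} (hg : g ≠ 1)
    (hH : IsMultiplyPretransitive H α g.support.card)
    (hcard : 2 * g.support.card ≤ Fintype.card α + 1) :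
    ∃ h ∈ H, ∃ x, g.support ∩ (h * g * h⁻¹).support = {x} := by
  obtain ⟨x, hx⟩ := Finset.nonempty_iff_ne_empty.mpr (mt support_eq_empty_iff.mp hg)
  have hpos : 0 < g.support.card := Finset.card_pos.mpr ⟨x, hx⟩
  obtain ⟨T, hT, hTc⟩ : ∃ T ⊆ g.supportᶜ, T.card = g.support.card - 1 :=
    Finset.exists_subset_card_eq (by rw [Finset.card_compl]; lia)
  have hxT : x ∉ T := fun h => Finset.mem_compl.mp (hT h) hx
  have hcard_insert : (insert x T).card = g.support.card := by
    rw [Finset.card_insert_of_notMem hxT]; lia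
  obtain ⟨h, hh⟩ :=
    (Set.powersetCard.isPretransitive_of_isMultiplyPretransitive H hH).exists_smul_eq
      ⟨g.support, rfl⟩ ⟨insert x T, hcard_insert⟩
  have hsupp : (h * g * (h : Perm α)⁻¹).support = insert x T := by
    rw [support_conj, Finset.map_eq_image]
    exact congrArg Subtype.val hh
  refine ⟨h, h.2, x, ?_⟩
  rw [hsupp, Finset.inter_insert_of_mem hx,
    Finset.disjoint_iff_inter_eq_empty.mp (Finset.disjoint_right.mpr fun _ hy =>
      Finset.mem_compl.mp (hT hy))]
  rfl

theorem alternatingGroup_le_of_isCycle_prime {H : Subgroup (Perm α)} (hH : IsPreprimitive H α)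
    {g : Perm α} (hg : g ∈ H) (hc : g.IsCycle) (hp : g.support.card.Prime)
    (h2 : 2 * g.support.card ≤ Fintype.card α) : alternatingGroup α ≤ H := by
  have hpos := hp.pos
  have hmul : IsMultiplyPretransitive H α g.support.card := by
    have := isMultiplyPretransitive_of_isCycle hH hg hc hp (by lia)
    apply isMultiplyPretransitive_of_le' (n := Fintype.card α - g.support.card + 1) (by lia)
    rw [ENat.card_eq_coe_fintype_card]
    exact_mod_cast (by lia)
  obtain ⟨h, hh, x, hx⟩ := exists_conj_support_inter_eq_singleton hc.ne_one hmul (by lia)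
  have hconj := H.mul_mem (H.mul_mem hh hg) (H.inv_mem hh)
  exact alternatingGroup_le_of_isPreprimitive_of_isThreeCycle_mem hH (isThreeCycle_commutator hx)
    (H.mul_mem (H.mul_mem (H.mul_mem hg hconj) (H.inv_mem hg)) (H.inv_mem hconj))
end Jordan

section IsolatedCycle
variable {α : Type*} [Fintype α] [DecidableEq α]

theorem exists_mem_cycleType_dvd {σ : Perm α} {p : ℕ} (hp : p.Prime) (h : p ∣ orderOf σ) :
    ∃ m ∈ σ.cycleType, p ∣ m := by
  rw [← lcm_cycleType] at h
  exact hp.prime.exists_mem_multiset_dvd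
    (h.trans (Multiset.lcm_dvd.mpr fun _ => Multiset.dvd_prod))

theorem not_dvd_orderOf {σ : Perm α} {p : ℕ} (hp : p.Prime)
    (h : σ.cycleType.countP (p ∣ ·) = 0) : ¬ p ∣ orderOf σ := fun hdvd =>
  have ⟨_, hm, hpm⟩ := exists_mem_cycleType_dvd hp hdvd
  Multiset.countP_eq_zero.mp h _ hm hpm

theorem exists_disjoint_mul_isCycle {σ : Perm α} {p : ℕ} (hp : p.Prime) (hmem : p ∈ σ.cycleType)
    (hσ : σ.cycleType.countP (p ∣ ·) ≤ 1) :
    ∃ τ c : Perm α, σ = τ * c ∧ Disjoint τ c ∧ c.IsCycle ∧ c.support.card = p ∧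
      ¬ p ∣ orderOf τ := by
  rw [cycleType_def, Multiset.mem_map] at hmem
  obtain ⟨c, hc, hcp⟩ := hmem
  have hcyc : c.IsCycle := (mem_cycleFactorsFinset_iff.mp hc).1
  have hdisj : Disjoint (σ * c⁻¹) c := disjoint_mul_inv_of_mem_cycleFactorsFinset hc
  refine ⟨σ * c⁻¹, c, (inv_mul_cancel_right σ c).symm, hdisj, hcyc, hcp, not_dvd_orderOf hp ?_⟩
  have hsplit : σ.cycleType = (σ * c⁻¹).cycleType + {p} := by
    rw [← hcp, Function.comp_apply, ← hcyc.cycleType, ← hdisj.cycleType_mul,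
      inv_mul_cancel_right]
  rw [hsplit, Multiset.countP_add, ← Multiset.cons_zero, Multiset.countP_cons_of_pos _ dvd_rfl]
    at hσ
  lia

theorem exists_pow_isCycle_of_isolated {ι : Type*} [Fintype ι] {σ : ι → Perm α} {i : ι} {p : ℕ}
    (hp : p.Prime) (hmem : p ∈ (σ i).cycleType)
    (hσ : ∑ j, (σ j).cycleType.countP (p ∣ ·) ≤ 1) :
    ∃ r, (σ i ^ r).IsCycle ∧ (σ i ^ r).support.card = p ∧ ∀ j ≠ i, σ j ^ r = 1 := by
  classical
  have hi : 0 < (σ i).cycleType.countP (p ∣ ·) := Multiset.countP_pos_of_mem hmem dvd_rfl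
  rw [Fintype.sum_eq_add_sum_compl i] at hσ
  have hsum : ∑ j ∈ {i}ᶜ, (σ j).cycleType.countP (p ∣ ·) = 0 := by lia
  have hrest : ∀ j ≠ i, (σ j).cycleType.countP (p ∣ ·) = 0 := fun j hj =>
    Finset.sum_eq_zero_iff.mp hsum j (by simpa using hj)
  obtain ⟨τ, c, hτc, hdisj, hcyc, hcard, hτ⟩ :=
    exists_disjoint_mul_isCycle hp hmem (by lia)
  set m := ∏ j ∈ {i}ᶜ, orderOf (σ j)
  have hm : ¬ p ∣ m := by
    rw [hp.prime.dvd_finsetProd_iff]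
    rintro ⟨j, hj, hdvd⟩
    exact not_dvd_orderOf hp (hrest j (by simpa using hj)) hdvd
  have hpow : σ i ^ (orderOf τ * m) = c ^ (orderOf τ * m) := by
    rw [hτc, hdisj.commute.mul_pow, pow_mul τ, pow_orderOf_eq_one, one_pow, one_mul]
  have hcoprime : (orderOf τ * m).Coprime (orderOf c) := by
    rw [hcyc.orderOf, hcard, Nat.coprime_comm, hp.coprime_iff_not_dvd, hp.dvd_mul]
    exact not_or.mpr ⟨hτ, hm⟩
  refine ⟨orderOf τ * m, ?_, ?_, fun j hj => orderOf_dvd_iff_pow_eq_one.mp ?_⟩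
  · rwa [hpow, hcyc.pow_iff]
  · rwa [hpow, support_pow_coprime hcoprime]
  · exact (Finset.dvd_prod_of_mem _ (by simpa using hj)).mul_left _

end IsolatedCycle

section CircGen

theorem mulSingle_mem_of_mem_alternatingGroup {ι α : Type*} [DecidableEq ι] [Fintype α]
    [DecidableEq α] (hα : 5 ≤ Nat.card α) {G : Subgroup (ι → Perm α)} {i : ι}
    (hG : alternatingGroup α ≤ G.map (Pi.evalMonoidHom _ i)) {a : Perm α}
    (ha : a ∈ alternatingGroup α) (ha1 : a ≠ 1) (hmem : Pi.mulSingle i a ∈ G) {b : Perm α}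
    (hb : b ∈ alternatingGroup α) : Pi.mulSingle i b ∈ G := by
  let N : Subgroup (alternatingGroup α) :=
    (G.comap (MonoidHom.mulSingle (fun _ => Perm α) i)).subgroupOf _
  have hN : N.Normal := by
    refine ⟨fun x hx g => ?_⟩
    obtain ⟨y, hy, hyg⟩ := hG g.2
    have hconj : Pi.mulSingle i ((g * x * g⁻¹ : alternatingGroup α) : Perm α)
        = y * Pi.mulSingle i (x : Perm α) * y⁻¹ := by
      ext1 j
      obtain rfl | hj := eq_or_ne j i
      · simp [← hyg]
      · simp [Pi.mulSingle_eq_of_ne hj]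
    change Pi.mulSingle i ((g * x * g⁻¹ : alternatingGroup α) : Perm α) ∈ G
    rw [hconj]
    exact G.mul_mem (G.mul_mem hy hx) (G.inv_mem hy)
  have := alternatingGroup.isSimpleGroup hα
  have hN1 : N ≠ ⊥ := fun hbot => by
    have ha' : (⟨a, ha⟩ : alternatingGroup α) ∈ N := hmem
    rw [hbot, Subgroup.mem_bot] at ha'
    exact ha1 (congrArg Subtype.val ha')
  have hb' : (⟨b, hb⟩ : alternatingGroup α) ∈ N :=
    (hN.eq_bot_or_eq_top.resolve_left hN1).symm ▸ Subgroup.mem_top _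
  exact hb'

variable {n k : ℕ} {σ : Fin n → Perm (Fin k)}

theorem circGen_eq_signGroup_of_ker_le (h : (signPi n k).ker ≤ circGen σ) :
    circGen σ = signGroup σ := by
  have hmap : Subgroup.closure (Set.range fun j : Fin n => fun i : Fin n => sign (σ (i + j)))
      = (circGen σ).map (signPi n k) := by
    rw [circGen, MonoidHom.map_closure, ← Set.range_comp]
    rfl
  rw [signGroup, hmap, Subgroup.comap_map_eq, sup_eq_left.mpr h]

theorem apply_add_mem_circGen (σ : Fin n → Perm (Fin k)) (j : Fin n) :
    (fun i => σ (i + j)) ∈ circGen σ :=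
  Subgroup.subset_closure ⟨j, rfl⟩

theorem closure_range_le_map_eval_circGen [NeZero n] (σ : Fin n → Perm (Fin k)) (i : Fin n) :
    Subgroup.closure (Set.range σ) ≤ (circGen σ).map (Pi.evalMonoidHom _ i) := by
  rw [Subgroup.closure_le]
  rintro _ ⟨j, rfl⟩
  exact ⟨_, apply_add_mem_circGen σ (j - i), by simp⟩

theorem mulSingle_pow_mem_circGen [NeZero n] {j : Fin n} {r : ℕ}
    (h : ∀ i ≠ j, σ i ^ r = 1) (i : Fin n) : Pi.mulSingle i (σ j ^ r) ∈ circGen σ := by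
  have hpow : Pi.mulSingle i (σ j ^ r) = (fun i' => σ (i' + (j - i))) ^ r := by
    ext1 i'
    obtain rfl | hi := eq_or_ne i' i
    · simp
    · rw [Pi.mulSingle_eq_of_ne hi, Pi.pow_apply, h]
      rwa [add_sub_left_comm, Ne, add_eq_left, sub_eq_zero]
  rw [hpow]
  exact Subgroup.pow_mem _ (apply_add_mem_circGen σ _) _

theorem circGen_eq_signGroup_of_isolated [NeZero n]
    (hprim : IsPreprimitive (Subgroup.closure (Set.range σ)) (Fin k)) {p : ℕ} (hp : p.Prime)
    (hp2 : p ≠ 2) (hpk : 2 * p ≤ k) {i : Fin n} (hmem : p ∈ (σ i).cycleType)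
    (hσ : ∑ j, (σ j).cycleType.countP (p ∣ ·) ≤ 1) : circGen σ = signGroup σ := by
  have hp3 : 2 < p := hp2.symm.lt_of_le hp.two_le
  obtain ⟨r, hcyc, hcard, hone⟩ := exists_pow_isCycle_of_isolated hp hmem hσ
  have heven : σ i ^ r ∈ alternatingGroup (Fin k) := by
    rw [mem_alternatingGroup, hcyc.sign, hcard, (hp.odd_of_ne_two hp2).neg_one_pow, neg_neg]
  have hpow : σ i ^ r ∈ Subgroup.closure (Set.range σ) :=
    Subgroup.pow_mem _ (Subgroup.subset_closure (Set.mem_range_self i)) r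
  have hA : alternatingGroup (Fin k) ≤ Subgroup.closure (Set.range σ) :=
    alternatingGroup_le_of_isCycle_prime hprim hpow hcyc (by rwa [hcard])
      (by rwa [hcard, Fintype.card_fin])
  refine circGen_eq_signGroup_of_ker_le fun x hx => Subgroup.pi_mem_of_mulSingle_mem _ fun j => ?_
  exact mulSingle_mem_of_mem_alternatingGroup (by rw [Nat.card_fin]; lia)
    (hA.trans (closure_range_le_map_eval_circGen σ j)) heven hcyc.ne_one
    (mulSingle_pow_mem_circGen hone j) (congrFun hx j)

end CircGen

section Probability
variable {Ω : Type*}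

/-- The probability of `P` for a uniformly random element of the finite type `Ω`. -/
noncomputable def prob (P : Ω → Prop) : ℝ := (Nat.card {ω // P ω} : ℝ) / Nat.card Ω

open scoped Classical in
theorem prob_eq_expect [Fintype Ω] (P : Ω → Prop) : prob P = 𝔼 ω, if P ω then (1 : ℝ) else 0 := by
  rw [prob, Fintype.expect_eq_sum_div_card, Finset.sum_boole, Nat.card_eq_fintype_card,
    Nat.card_eq_fintype_card, Fintype.card_subtype]

theorem prob_le_expect [Fintype Ω] {P : Ω → Prop} {X : Ω → ℝ} (hX : ∀ ω, 0 ≤ X ω)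
    (hP : ∀ ω, P ω → 1 ≤ X ω) : prob P ≤ 𝔼 ω, X ω := by
  classical
  rw [prob_eq_expect]
  refine Finset.expect_le_expect fun ω _ => ?_
  split_ifs with h
  exacts [hP ω h, hX ω]

theorem prob_eq_zero_le_one_div [Fintype Ω] [Nonempty Ω] {X : Ω → ℝ} {μ : ℝ} (hμ : 0 < μ)
    (hmean : 𝔼 ω, X ω = μ) (hsq : 𝔼 ω, X ω ^ 2 ≤ μ ^ 2 + μ) : prob (fun ω => X ω = 0) ≤ 1 / μ := by
  calc prob (fun ω => X ω = 0) ≤ 𝔼 ω, (X ω - μ) ^ 2 / μ ^ 2 := by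
        refine prob_le_expect (fun ω => by positivity) fun ω h => ?_
        rw [h, zero_sub, neg_sq, div_self (by positivity)]
    _ = (𝔼 ω, X ω ^ 2 - 2 * μ * 𝔼 ω, X ω + μ ^ 2) / μ ^ 2 := by
        rw [← Finset.expect_div, Finset.mul_expect, ← Finset.expect_sub_distrib,
          ← Fintype.expect_const (ι := Ω) (μ ^ 2), ← Finset.expect_add_distrib]
        simp only [sub_sq, mul_right_comm, Fintype.expect_const]
    _ ≤ μ / μ ^ 2 := by
        gcongr
        rw [hmean]
        linarith
    _ = 1 / μ := by field_simp

variable [Finite Ω]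

theorem prob_not [Nonempty Ω] (P : Ω → Prop) : prob (fun ω => ¬ P ω) = 1 - prob P := by
  classical
  have := Fintype.ofFinite Ω
  rw [prob_eq_expect, prob_eq_expect, ← Fintype.expect_const (ι := Ω) (1 : ℝ),
    ← Finset.expect_sub_distrib]
  refine Finset.expect_congr rfl fun ω _ => ?_
  split_ifs <;> simp_all

theorem prob_mono {P Q : Ω → Prop} (h : ∀ ω, P ω → Q ω) : prob P ≤ prob Q := by
  rw [prob, prob]
  gcongr
  exact Nat.card_le_card_of_injective _ (Subtype.map_injective h Function.injective_id)

theorem prob_exists_le {ι : Type*} (s : Finset ι) (P : ι → Ω → Prop) :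
    prob (fun ω => ∃ i ∈ s, P i ω) ≤ ∑ i ∈ s, prob (P i) := by
  classical
  have := Fintype.ofFinite Ω
  simp only [prob_eq_expect (P _), ← Finset.expect_sum_comm]
  refine prob_le_expect (fun ω => by positivity) fun ω ⟨i, hi, hPi⟩ => ?_
  refine (Finset.single_le_sum (f := fun i => if P i ω then (1 : ℝ) else 0)
    (fun j _ => by positivity) hi).trans' ?_
  rw [if_pos hPi]

theorem prob_or_le (P Q : Ω → Prop) : prob (fun ω => P ω ∨ Q ω) ≤ prob P + prob Q := by
  classical
  have := Fintype.ofFinite Ω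
  rw [prob_eq_expect P, prob_eq_expect Q, ← Finset.expect_add_distrib]
  refine prob_le_expect (fun ω => by positivity) fun ω h => ?_
  split_ifs <;> simp_all

end Probability

section Marginals

variable {ι G : Type*} [Group G]

theorem surjective_eval_prod_eval {i j : ι} (hij : i ≠ j) :
    Function.Surjective
      ((Pi.evalMonoidHom (fun _ : ι => G) i).prod (Pi.evalMonoidHom (fun _ : ι => G) j)) := by
  classical
  exact fun x => ⟨Function.update (fun _ => x.1) j x.2, by simp [Function.update_of_ne hij]⟩

theorem expect_comp_of_surjective {G' : Type*} [Group G'] [Fintype G] [Fintype G'] {f : G →* G'}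
    (hf : Function.Surjective f) (F : G' → ℝ) : 𝔼 x, F (f x) = 𝔼 y, F y := by
  have htranslate (y : G') : 𝔼 x, F (f x * y) = 𝔼 x, F (f x) := by
    obtain ⟨z, rfl⟩ := hf y
    exact Fintype.expect_equiv (Equiv.mulRight z) _ _ fun x => by simp
  calc 𝔼 x, F (f x) = 𝔼 y, 𝔼 x, F (f x * y) := by
        simp only [htranslate, Fintype.expect_const]
    _ = 𝔼 x, 𝔼 y, F (f x * y) := Finset.expect_comm ..
    _ = 𝔼 _x : G, 𝔼 y, F y :=
        Finset.expect_congr rfl fun x _ =>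
          Fintype.expect_equiv (Equiv.mulLeft (f x)) _ _ fun _ => rfl
    _ = 𝔼 y, F y := Fintype.expect_const _

theorem expect_eval [Fintype G] [Fintype ι] [DecidableEq ι] (i : ι) (F : G → ℝ) :
    𝔼 x : ι → G, F (x i) = 𝔼 g, F g :=
  expect_comp_of_surjective (f := Pi.evalMonoidHom (fun _ : ι => G) i)
    (Function.surjective_eval i) F

theorem prob_eval [Finite G] [Finite ι] (i : ι) (P : G → Prop) :
    prob (fun x : ι → G => P (x i)) = prob P := by
  classical
  have := Fintype.ofFinite G
  have := Fintype.ofFinite ι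
  rw [prob_eq_expect (Ω := ι → G), prob_eq_expect P]
  exact expect_eval i fun g => if P g then 1 else 0

theorem expect_eval_mul_eval [Fintype G] [Fintype ι] [DecidableEq ι] {i j : ι} (hij : i ≠ j)
    (F F' : G → ℝ) :
    𝔼 x : ι → G, F (x i) * F' (x j) = (𝔼 g, F g) * 𝔼 g, F' g := by
  rw [Fintype.expect_mul_expect, ← Finset.expect_product', Finset.univ_product_univ]
  exact expect_comp_of_surjective (surjective_eval_prod_eval (G := G) hij)
    fun x : G × G => F x.1 * F' x.2

theorem prob_eval_and_eval [Finite G] [Finite ι] {i j : ι} (hij : i ≠ j) (P Q : G → Prop) :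
    prob (fun x : ι → G => P (x i) ∧ Q (x j)) = prob P * prob Q := by
  classical
  have := Fintype.ofFinite G
  have := Fintype.ofFinite ι
  simp only [prob_eq_expect, ← expect_eval_mul_eval hij]
  refine Finset.expect_congr rfl fun x _ => ?_
  split_ifs <;> simp_all

end Marginals

section CycleStatistics
variable {α : Type*} [Fintype α] [DecidableEq α]

theorem mem_cycleFactorsFinset_mul_iff {c : Perm α} (hc : c.IsCycle) (τ : Perm α) :
    c ∈ (τ * c).cycleFactorsFinset ↔ ∀ x, ¬ x ∉ c.support → τ x = x := by
  simp only [mem_cycleFactorsFinset_iff, hc, true_and, Perm.mul_apply, not_not]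
  refine ⟨fun h x hx => ?_, fun h x hx => (h _ (apply_mem_support.mpr hx)).symm⟩
  obtain ⟨y, rfl⟩ := c.surjective x
  exact (h y (apply_mem_support.mp hx)).symm

theorem sum_cycleType_filter_mem_cycleFactorsFinset {c : Perm α} (hc : c.IsCycle) {β : Type*}
    [Fintype β] [DecidableEq β] (f : β ≃ {x // x ∉ c.support}) (F : Multiset ℕ → ℝ) :
    ∑ σ : Perm α with c ∈ σ.cycleFactorsFinset, F σ.cycleType
      = ∑ τ : Perm β, F (c.support.card ::ₘ τ.cycleType) := by
  let e : Perm β ≃ {σ : Perm α // c ∈ σ.cycleFactorsFinset} :=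
    (f.permCongr.trans (Perm.subtypeEquivSubtypePerm (· ∉ c.support))).trans
      ((Equiv.mulRight c).subtypeEquiv fun τ => (mem_cycleFactorsFinset_mul_iff hc τ).symm)
  have hdisj (τ : Perm β) : Disjoint (τ.extendDomain f) c := fun x => by
    by_cases hx : x ∉ c.support
    · exact Or.inr (notMem_support.mp hx)
    · exact Or.inl (extendDomain_apply_not_subtype τ f hx)
  rw [← Finset.sum_subtype_eq_sum_filter, Finset.subtype_univ]
  refine (Fintype.sum_equiv e _ _ fun τ => ?_).symm
  change _ = F (τ.extendDomain f * c).cycleType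
  rw [(hdisj τ).cycleType_mul, cycleType_extendDomain, hc.cycleType, add_comm,
    Multiset.singleton_add]

theorem count_cycleType_eq_card (σ : Perm α) (a : ℕ) :
    σ.cycleType.count a = (σ.cycleFactorsFinset.filter fun c => c.cycleType = {a}).card := by
  rw [cycleType_def, Multiset.count_map, ← Finset.filter_val, Finset.card_val]
  congr 1
  refine Finset.filter_congr fun c hc => ?_
  rw [(mem_cycleFactorsFinset_iff.mp hc).1.cycleType, Multiset.singleton_inj, eq_comm,
    Function.comp_apply]

theorem sum_count_mul {a : ℕ} (ha : 2 ≤ a) (haα : a ≤ Fintype.card α) (F : Multiset ℕ → ℝ) :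
    ∑ σ : Perm α, (σ.cycleType.count a : ℝ) * F σ.cycleType
      = ((a - 1).factorial * (Fintype.card α).choose a : ℕ) *
        ∑ τ : Perm (Fin (Fintype.card α - a)), F (a ::ₘ τ.cycleType) := by
  calc ∑ σ : Perm α, (σ.cycleType.count a : ℝ) * F σ.cycleType
      = ∑ σ : Perm α, ∑ c ∈ σ.cycleFactorsFinset with c.cycleType = {a}, F σ.cycleType := by
        simp only [count_cycleType_eq_card, Finset.sum_const, nsmul_eq_mul]
    _ = ∑ c : Perm α with c.cycleType = {a},
          ∑ σ : Perm α with c ∈ σ.cycleFactorsFinset, F σ.cycleType :=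
        Finset.sum_comm' (by simp)
    _ = ∑ c : Perm α with c.cycleType = {a},
          ∑ τ : Perm (Fin (Fintype.card α - a)), F (a ::ₘ τ.cycleType) := by
        refine Finset.sum_congr rfl fun c hc => ?_
        have hca : c.cycleType = {a} := (Finset.mem_filter.mp hc).2
        have hcyc : c.IsCycle := by rw [← card_cycleType_eq_one, hca, Multiset.card_singleton]
        have hcard : c.support.card = a := by rw [← sum_cycleType, hca, Multiset.sum_singleton]
        have hcompl : Fintype.card {x // x ∉ c.support} = Fintype.card α - a := by
          rw [Fintype.card_subtype_compl, Fintype.card_coe, hcard]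
        rw [sum_cycleType_filter_mem_cycleFactorsFinset hcyc
          (Fintype.equivFinOfCardEq hcompl).symm, hcard]
    _ = _ := by
        rw [Finset.sum_const, nsmul_eq_mul, card_of_cycleType_singleton ha haα]

theorem expect_count_mul {a : ℕ} (ha : 2 ≤ a) (haα : a ≤ Fintype.card α) (F : Multiset ℕ → ℝ) :
    𝔼 σ : Perm α, (σ.cycleType.count a : ℝ) * F σ.cycleType
      = 1 / a * 𝔼 τ : Perm (Fin (Fintype.card α - a)), F (a ::ₘ τ.cycleType) := by
  have hfact : (((Fintype.card α).choose a * (a * (a - 1).factorial)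
      * (Fintype.card α - a).factorial : ℕ) : ℝ) = (Fintype.card α).factorial := by
    rw [Nat.mul_factorial_pred (by lia), Nat.choose_mul_factorial_mul_factorial haα]
  have := (Nat.choose_pos haα).ne'
  have := Nat.factorial_ne_zero (a - 1)
  have := Nat.factorial_ne_zero (Fintype.card α - a)
  rw [Fintype.expect_eq_sum_div_card, Fintype.expect_eq_sum_div_card, sum_count_mul ha haα,
    Fintype.card_perm, Fintype.card_perm, Fintype.card_fin, ← hfact]
  push_cast
  field_simp

theorem count_cycleType_eq_zero (σ : Perm α) {a : ℕ} (ha : Fintype.card α < a) :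
    σ.cycleType.count a = 0 :=
  Multiset.count_eq_zero_of_notMem fun hmem =>
    ((le_card_support_of_mem_cycleType hmem).trans (Finset.card_le_univ _)).not_gt ha

theorem expect_count {a : ℕ} (ha : 2 ≤ a) (haα : a ≤ Fintype.card α) :
    𝔼 σ : Perm α, (σ.cycleType.count a : ℝ) = 1 / a := by
  simpa using expect_count_mul ha haα fun _ => 1

theorem expect_count_le {a : ℕ} (ha : 2 ≤ a) :
    𝔼 σ : Perm α, (σ.cycleType.count a : ℝ) ≤ 1 / a := by
  obtain haα | haα := le_or_gt a (Fintype.card α)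
  · exact (expect_count ha haα).le
  · simp [count_cycleType_eq_zero _ haα]

theorem expect_count_mul_count_le {a b : ℕ} (ha : 2 ≤ a) (hb : 2 ≤ b)
    (haα : a ≤ Fintype.card α) :
    𝔼 σ : Perm α, (σ.cycleType.count a : ℝ) * σ.cycleType.count b
      ≤ 1 / a * (1 / b) + if b = a then (1 / a : ℝ) else 0 := by
  rw [expect_count_mul ha haα fun m => (m.count b : ℝ)]
  simp only [Multiset.count_cons, Nat.cast_add, Nat.cast_ite, Nat.cast_one, Nat.cast_zero,
    Finset.expect_add_distrib, Fintype.expect_const, mul_add, mul_ite, mul_one, mul_zero]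
  gcongr
  exact expect_count_le hb

theorem countP_dvd_le_sum_count {p k : ℕ} (hp : 0 < p) {m : Multiset ℕ}
    (hm : ∀ a ∈ m, 0 < a ∧ a ≤ k) :
    m.countP (p ∣ ·) ≤ ∑ i ∈ Finset.range k, m.count (p * (i + 1)) := by
  have hinj : Function.Injective fun i => p * (i + 1) := fun i j h =>
    Nat.succ_injective (Nat.eq_of_mul_eq_mul_left hp h)
  have hmultiple : ∀ a ∈ m.filter (p ∣ ·), a ∈ (Finset.range k).image fun i => p * (i + 1) := by
    intro a ha
    obtain ⟨ham, i, rfl⟩ := Multiset.mem_filter.mp ha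
    obtain ⟨hpos, hle⟩ := hm _ ham
    have hi : 0 < i := Nat.pos_of_mul_pos_left hpos
    exact Finset.mem_image.mpr ⟨i - 1, Finset.mem_range.mpr (by nlinarith [Nat.sub_lt hi one_pos]),
      by rw [Nat.sub_add_cancel hi]⟩
  rw [Multiset.countP_eq_card_filter, ← Multiset.sum_count_eq_card hmultiple,
    Finset.sum_image fun i _ j _ h => hinj h]
  exact Finset.sum_le_sum fun i _ => Multiset.count_le_of_le _ (Multiset.filter_le _ _)

theorem expect_countP_dvd_le {p : ℕ} (hp : 2 ≤ p) :
    𝔼 σ : Perm α, (σ.cycleType.countP (p ∣ ·) : ℝ) ≤ harmonic (Fintype.card α) / p := by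
  calc 𝔼 σ : Perm α, (σ.cycleType.countP (p ∣ ·) : ℝ)
      ≤ 𝔼 σ : Perm α, ∑ i ∈ Finset.range (Fintype.card α),
          (σ.cycleType.count (p * (i + 1)) : ℝ) := by
        refine Finset.expect_le_expect fun σ _ => ?_
        exact_mod_cast countP_dvd_le_sum_count (by lia) fun a ha =>
          ⟨by have := two_le_of_mem_cycleType ha; lia,
            (le_card_support_of_mem_cycleType ha).trans (Finset.card_le_univ _)⟩
    _ = ∑ i ∈ Finset.range (Fintype.card α),
          𝔼 σ : Perm α, (σ.cycleType.count (p * (i + 1)) : ℝ) := Finset.expect_sum_comm ..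
    _ ≤ ∑ i ∈ Finset.range (Fintype.card α), ((i + 1 : ℕ) : ℝ)⁻¹ / p := by
        refine Finset.sum_le_sum fun i _ => (expect_count_le (by nlinarith)).trans_eq ?_
        push_cast
        field_simp
    _ = harmonic (Fintype.card α) / p := by
        rw [← Finset.sum_div, harmonic]
        push_cast
        rfl

theorem harmonic_nonneg (n : ℕ) : 0 ≤ harmonic n := Finset.sum_nonneg fun _ _ => by positivity

theorem monotone_harmonic : Monotone harmonic := fun _ _ h =>
  Finset.sum_le_sum_of_subset_of_nonneg (Finset.range_mono h) fun _ _ _ => by positivity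

theorem expect_count_mul_countP_dvd_sub_one_le {p : ℕ} (hp : 2 ≤ p) :
    𝔼 σ : Perm α, (σ.cycleType.count p : ℝ) * (σ.cycleType.countP (p ∣ ·) - 1)
      ≤ harmonic (Fintype.card α) / (p : ℝ) ^ 2 := by
  obtain hpα | hpα := le_or_gt p (Fintype.card α)
  · rw [expect_count_mul hp hpα fun m => (m.countP (p ∣ ·) : ℝ) - 1]
    simp only [Multiset.countP_cons_of_pos _ (dvd_refl p), Nat.cast_add, Nat.cast_one,
      add_sub_cancel_right]
    have hle : (harmonic (Fintype.card α - p) : ℝ) ≤ harmonic (Fintype.card α) :=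
      Rat.cast_le.mpr (monotone_harmonic (Nat.sub_le _ p))
    calc 1 / (p : ℝ) * 𝔼 τ : Perm (Fin (Fintype.card α - p)), (τ.cycleType.countP (p ∣ ·) : ℝ)
        ≤ 1 / p * (harmonic (Fintype.card α) / p) := by
          gcongr
          refine expect_countP_dvd_le hp |>.trans ?_
          rw [Fintype.card_fin]
          gcongr
      _ = _ := by ring
  · simp only [count_cycleType_eq_zero _ hpα, Nat.cast_zero, zero_mul, Finset.expect_const_zero]
    exact div_nonneg (Rat.cast_nonneg.mpr (harmonic_nonneg _)) (sq_nonneg _)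

theorem prob_forall_notMem_cycleType_le {S : Finset ℕ} (hS : ∀ a ∈ S, 2 ≤ a ∧ a ≤ Fintype.card α)
    (hpos : 0 < ∑ a ∈ S, (1 / a : ℝ)) :
    prob (fun σ : Perm α => ∀ a ∈ S, a ∉ σ.cycleType) ≤ 1 / ∑ a ∈ S, (1 / a : ℝ) := by
  let X (σ : Perm α) : ℝ := ∑ a ∈ S, (σ.cycleType.count a : ℝ)
  have hmean : 𝔼 σ, X σ = ∑ a ∈ S, (1 / a : ℝ) := by
    rw [Finset.expect_sum_comm]
    exact Finset.sum_congr rfl fun a ha => expect_count (hS a ha).1 (hS a ha).2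
  have hsq : 𝔼 σ, X σ ^ 2 ≤ (∑ a ∈ S, (1 / a : ℝ)) ^ 2 + ∑ a ∈ S, (1 / a : ℝ) := by
    calc 𝔼 σ, X σ ^ 2
        = ∑ a ∈ S, ∑ b ∈ S, 𝔼 σ : Perm α, (σ.cycleType.count a : ℝ) * σ.cycleType.count b := by
          simp only [X, sq, Finset.sum_mul_sum, Finset.expect_sum_comm]
      _ ≤ ∑ a ∈ S, ∑ b ∈ S, (1 / (a : ℝ) * (1 / b) + if b = a then (1 / a : ℝ) else 0) :=
          Finset.sum_le_sum fun a ha => Finset.sum_le_sum fun b hb =>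
            expect_count_mul_count_le (hS a ha).1 (hS b hb).1 (hS a ha).2
      _ = _ := by
          simp only [Finset.sum_add_distrib, ← Finset.sum_mul_sum, ← sq, Finset.sum_ite_eq']
          congr 1
          exact Finset.sum_congr rfl fun a ha => if_pos ha
  refine (prob_mono fun σ hσ => ?_).trans (prob_eq_zero_le_one_div hpos hmean hsq)
  exact Finset.sum_eq_zero fun a ha => by
    rw [Multiset.count_eq_zero_of_notMem (hσ a ha), Nat.cast_zero]

variable {ι : Type*} [Fintype ι]

theorem expect_count_mul_countP_dvd_le [DecidableEq ι] {i j : ι} (hij : i ≠ j) {p : ℕ}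
    (hp : 2 ≤ p) :
    𝔼 σ : ι → Perm α, ((σ i).cycleType.count p : ℝ) * (σ j).cycleType.countP (p ∣ ·)
      ≤ harmonic (Fintype.card α) / (p : ℝ) ^ 2 := by
  calc 𝔼 σ : ι → Perm α, ((σ i).cycleType.count p : ℝ) * (σ j).cycleType.countP (p ∣ ·)
      = (𝔼 g : Perm α, (g.cycleType.count p : ℝ)) *
          𝔼 g : Perm α, (g.cycleType.countP (p ∣ ·) : ℝ) :=
        expect_eval_mul_eval hij (fun g : Perm α => (g.cycleType.count p : ℝ))
          fun g => (g.cycleType.countP (p ∣ ·) : ℝ)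
    _ ≤ 1 / p * (harmonic (Fintype.card α) / p) :=
        mul_le_mul (expect_count_le hp) (expect_countP_dvd_le hp)
          (Finset.expect_nonneg fun g _ => Nat.cast_nonneg _) (by positivity)
    _ = _ := by ring

theorem expect_count_mul_sum_countP_dvd_sub_one_le [DecidableEq ι] (i : ι) {p : ℕ} (hp : 2 ≤ p) :
    𝔼 σ : ι → Perm α,
        ((σ i).cycleType.count p : ℝ) * (∑ j, ((σ j).cycleType.countP (p ∣ ·) : ℝ) - 1)
      ≤ Fintype.card ι * (harmonic (Fintype.card α) / (p : ℝ) ^ 2) := by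
  calc 𝔼 σ : ι → Perm α,
        ((σ i).cycleType.count p : ℝ) * (∑ j, ((σ j).cycleType.countP (p ∣ ·) : ℝ) - 1)
      = 𝔼 σ : ι → Perm α,
          ((σ i).cycleType.count p : ℝ) * ((σ i).cycleType.countP (p ∣ ·) - 1) +
        ∑ j ∈ {i}ᶜ,
          𝔼 σ : ι → Perm α, ((σ i).cycleType.count p : ℝ) * (σ j).cycleType.countP (p ∣ ·) := by
        rw [← Finset.expect_sum_comm, ← Finset.expect_add_distrib]
        refine Finset.expect_congr rfl fun σ _ => ?_
        rw [Fintype.sum_eq_add_sum_compl i, ← Finset.mul_sum]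
        ring
    _ ≤ harmonic (Fintype.card α) / (p : ℝ) ^ 2
          + ∑ j ∈ {i}ᶜ, harmonic (Fintype.card α) / (p : ℝ) ^ 2 := by
        refine add_le_add ?_ (Finset.sum_le_sum fun j hj =>
          expect_count_mul_countP_dvd_le (by simpa [eq_comm] using hj) hp)
        rw [expect_eval i fun g : Perm α =>
          (g.cycleType.count p : ℝ) * (g.cycleType.countP (p ∣ ·) - 1)]
        exact expect_count_mul_countP_dvd_sub_one_le hp
    _ = ∑ _j : ι, (harmonic (Fintype.card α) / (p : ℝ) ^ 2 : ℝ) :=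
        (Fintype.sum_eq_add_sum_compl i fun _ => (harmonic (Fintype.card α) / (p : ℝ) ^ 2 : ℝ)).symm
    _ = Fintype.card ι * (harmonic (Fintype.card α) / (p : ℝ) ^ 2) := by
        rw [Finset.sum_const, Finset.card_univ, nsmul_eq_mul]

theorem prob_mem_cycleType_and_one_lt_sum_countP_le (i : ι) {p : ℕ} (hp : 2 ≤ p) :
    prob (fun σ : ι → Perm α =>
        p ∈ (σ i).cycleType ∧ 1 < ∑ j, (σ j).cycleType.countP (p ∣ ·))
      ≤ Fintype.card ι * (harmonic (Fintype.card α) / (p : ℝ) ^ 2) := by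
  classical
  refine (prob_le_expect (fun σ => ?_) fun σ ⟨hmem, hσ⟩ => ?_).trans
    (expect_count_mul_sum_countP_dvd_sub_one_le i hp)
  · obtain hzero | hpos := Nat.eq_zero_or_pos ((σ i).cycleType.count p)
    · simp [hzero]
    have hi := Multiset.countP_pos_of_mem (p := (p ∣ ·)) (Multiset.count_pos.mp hpos) dvd_rfl
    have hsum : (σ i).cycleType.countP (p ∣ ·) ≤ ∑ j, (σ j).cycleType.countP (p ∣ ·) :=
      Finset.single_le_sum (f := fun j => (σ j).cycleType.countP (p ∣ ·))
        (fun _ _ => Nat.zero_le _) (Finset.mem_univ i)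
    have : (1 : ℝ) ≤ ∑ j, ((σ j).cycleType.countP (p ∣ ·) : ℝ) := by
      exact_mod_cast hi.trans_le hsum
    exact mul_nonneg (Nat.cast_nonneg _) (sub_nonneg.mpr this)
  · have hcount : (1 : ℝ) ≤ (σ i).cycleType.count p := by
      exact_mod_cast Multiset.one_le_count_iff_mem.mpr hmem
    have hsum : (2 : ℝ) ≤ ∑ j, ((σ j).cycleType.countP (p ∣ ·) : ℝ) := by exact_mod_cast hσ
    nlinarith

end CycleStatistics

section FixedPoint
variable {G X : Type*} [Group G] [Finite G] [MulAction G X] [IsPretransitive G X]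

theorem prob_smul_eq_self (x : X) : prob (fun g : G => g • x = x) = 1 / Nat.card X := by
  have hcard : Nat.card {g : G // g • x = x} * Nat.card X = Nat.card G := by
    rw [← index_stabilizer_of_transitive G x]
    exact Subgroup.card_mul_index (stabilizer G x)
  have hG : Nat.card G ≠ 0 := Nat.card_pos.ne'
  have hX : (Nat.card X : ℝ) ≠ 0 := Nat.cast_ne_zero.mpr fun h => hG (by rw [← hcard, h, mul_zero])
  rw [prob, div_eq_div_iff (Nat.cast_ne_zero.mpr hG) hX, one_mul]
  exact_mod_cast hcard

theorem prob_exists_forall_smul_eq_self_le [Finite X] {ι : Type*} [Finite ι] [Nontrivial ι] :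
    prob (fun σ : ι → G => ∃ x : X, ∀ i, σ i • x = x) ≤ 1 / Nat.card X := by
  classical
  have := Fintype.ofFinite X
  obtain ⟨i, j, hij⟩ := exists_pair_ne ι
  calc prob (fun σ : ι → G => ∃ x : X, ∀ i, σ i • x = x)
      ≤ prob fun σ : ι → G => ∃ x ∈ (Finset.univ : Finset X), σ i • x = x ∧ σ j • x = x :=
        prob_mono fun σ ⟨x, hx⟩ => ⟨x, Finset.mem_univ x, hx i, hx j⟩
    _ ≤ ∑ x : X, prob fun σ : ι → G => σ i • x = x ∧ σ j • x = x := prob_exists_le _ _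
    _ = ∑ _x : X, 1 / (Nat.card X : ℝ) * (1 / Nat.card X) :=
        Finset.sum_congr rfl fun x _ => by
          rw [prob_eval_and_eval hij (· • x = x) (· • x = x), prob_smul_eq_self]
    _ = Nat.card X * (1 / (Nat.card X : ℝ) * (1 / Nat.card X)) := by
        rw [Finset.sum_const, Finset.card_univ, nsmul_eq_mul, Nat.card_eq_fintype_card]
    _ = 1 / Nat.card X := by
        obtain h | h := eq_or_ne (Nat.card X : ℝ) 0
        · rw [h, div_zero, zero_mul]
        · field_simp

end FixedPoint

section UniformSetoid

/-- The equivalence relations on `α` all of whose classes have `d` elements; for `1 < d < |α|`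
these are the block systems an imprimitive permutation group may preserve. -/
@[ext]
structure UniformSetoid (α : Type*) (d : ℕ) where
  rel : Setoid α
  card_class (a : α) : Nat.card {b // rel a b} = d

namespace UniformSetoid
variable {α : Type*} {d : ℕ}

instance : MulAction (Perm α) (UniformSetoid α d) where
  smul g r := ⟨r.rel.comap ⇑g⁻¹, fun a =>
    (Nat.card_congr (g⁻¹.subtypeEquiv fun _ => Iff.rfl)).trans (r.card_class (g⁻¹ a))⟩
  one_smul _ := rfl
  mul_smul _ _ _ := rfl

theorem smul_apply (g : Perm α) (r : UniformSetoid α d) (a b : α) :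
    (g • r).rel a b ↔ r.rel (g⁻¹ a) (g⁻¹ b) := Iff.rfl

variable [Finite α]

instance : Finite (UniformSetoid α d) :=
  have : Finite (Setoid α) := Finite.of_injective (fun r : Setoid α => (r : α → α → Prop))
    fun _ _ h => Setoid.ext fun a b => iff_of_eq (congrFun₂ h a b)
  Finite.of_injective rel fun _ _ => UniformSetoid.ext

theorem exists_equiv_prod (hd : 0 < d) (r : UniformSetoid α d) :
    ∃ e : α ≃ Fin (Nat.card α / d) × Fin d, ∀ a b, r.rel a b ↔ (e a).1 = (e b).1 := by
  have hfiber (q : Quotient r.rel) : Nonempty ({a // Quotient.mk r.rel a = q} ≃ Fin d) := by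
    obtain ⟨a, rfl⟩ := q.exists_rep
    refine ⟨Finite.equivFinOfCardEq (Eq.trans ?_ (r.card_class a))⟩
    exact Nat.card_congr (Equiv.subtypeEquivRight fun b => by rw [Quotient.eq, Setoid.comm'])
  let e : α ≃ Quotient r.rel × Fin d :=
    (Equiv.sigmaFiberEquiv (Quotient.mk r.rel)).symm.trans
      (Equiv.sigmaEquivProdOfEquiv fun q => (hfiber q).some)
  have hcard : Nat.card (Quotient r.rel) = Nat.card α / d := by
    rw [Nat.card_congr e, Nat.card_prod, Nat.card_fin, Nat.mul_div_cancel _ hd]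
  refine ⟨e.trans ((Finite.equivFinOfCardEq hcard).prodCongr (Equiv.refl _)), fun a b => ?_⟩
  exact Quotient.eq.symm.trans (Equiv.apply_eq_iff_eq _).symm

theorem isPretransitive (hd : 0 < d) : IsPretransitive (Perm α) (UniformSetoid α d) where
  exists_smul_eq r r' := by
    obtain ⟨e, he⟩ := exists_equiv_prod hd r
    obtain ⟨e', he'⟩ := exists_equiv_prod hd r'
    refine ⟨e.trans e'.symm, UniformSetoid.ext (Setoid.ext fun a b => ?_)⟩
    rw [smul_apply, he, he']
    simp [Equiv.Perm.inv_def]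

open scoped Pointwise in
theorem exists_class_eq (r : UniformSetoid α d) {a : α} {s : Finset α}
    (ha : a ∈ s) (hs : s.card = d) : ∃ r' : UniformSetoid α d, ∀ b, r'.rel a b ↔ b ∈ s := by
  have := Fintype.ofFinite α
  classical
  have hclass : ({b | r.rel a b} : Finset α).card = d := by
    simpa only [Nat.card_eq_fintype_card, Fintype.card_subtype] using r.card_class a
  obtain ⟨g, hg⟩ := (Set.powersetCard.isPretransitive (α := α) (n := d)).exists_smul_eq
    (Set.powersetCard.ofCard hclass) (Set.powersetCard.ofCard hs)
  have hmem (b : α) : r.rel a (g⁻¹ b) ↔ b ∈ s := by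
    rw [show s = g • ({b | r.rel a b} : Finset α) from (congrArg Subtype.val hg).symm,
      ← Finset.inv_smul_mem_iff, Perm.smul_def, Finset.mem_filter_univ]
  refine ⟨g • r, fun b => ?_⟩
  rw [smul_apply, ← hmem]
  have hga := (hmem a).mpr ha
  exact ⟨r.rel.trans' hga, r.rel.trans' (r.rel.symm' hga)⟩

theorem choose_le_card [Nonempty α] (r : UniformSetoid α (d + 1)) :
    (Nat.card α - 1).choose d ≤ Nat.card (UniformSetoid α (d + 1)) := by
  classical
  have := Fintype.ofFinite α
  obtain ⟨a⟩ := ‹Nonempty α›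
  have hnotMem (s : Finset.powersetCard d {a}ᶜ) : a ∉ s.1 := fun h => by
    simpa using (Finset.mem_powersetCard.mp s.2).1 h
  have hexists (s : Finset.powersetCard d {a}ᶜ) :
      ∃ r' : UniformSetoid α (d + 1), ∀ b, r'.rel a b ↔ b ∈ insert a s.1 :=
    exists_class_eq r (Finset.mem_insert_self a _) (by
      rw [Finset.card_insert_of_notMem (hnotMem s), (Finset.mem_powersetCard.mp s.2).2])
  choose F hF using hexists
  have hinj : Function.Injective F := fun s t hst => by
    have : insert a s.1 = insert a t.1 := by
      ext b
      rw [← hF, ← hF, hst]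
    rw [Subtype.ext_iff, ← Finset.erase_insert (hnotMem s), this, Finset.erase_insert (hnotMem t)]
  calc (Nat.card α - 1).choose d = Nat.card (Finset.powersetCard d {a}ᶜ) := by
        rw [Nat.card_eq_fintype_card, Nat.card_eq_fintype_card, Fintype.card_coe,
          Finset.card_powersetCard, Finset.card_compl, Finset.card_singleton]
    _ ≤ Nat.card (UniformSetoid α (d + 1)) := Nat.card_le_card_of_injective F hinj

end UniformSetoid
end UniformSetoid

section Imprimitive
variable {α : Type*}

open scoped Pointwise in
theorem exists_uniformSetoid_of_isBlock {H : Subgroup (Perm α)} [IsPretransitive H α] {B : Set α}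
    (hB : IsBlock H B) (hne : B.Nonempty) :
    ∃ r : UniformSetoid α (Nat.card B), ∀ g ∈ H, g • r = r := by
  have hpart := (hB.isBlockSystem hne).left.right
  refine ⟨⟨Setoid.mkClasses _ hpart, fun a => ?_⟩, fun g hg =>
    UniformSetoid.ext (Setoid.ext fun a b => ?_)⟩
  · obtain ⟨g, hg : g • B = _⟩ := Setoid.eqv_class_mem' hpart (x := a)
    exact (congrArg Set.ncard hg).symm.trans (Set.ncard_smul_set g B)
  · change (∀ s ∈ Set.range _, g⁻¹ • a ∈ s → g⁻¹ • b ∈ s) ↔ ∀ s ∈ Set.range _, a ∈ s → b ∈ s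
    rw [Set.forall_mem_range, Set.forall_mem_range]
    refine (Equiv.mulLeft (⟨g, hg⟩ : H)).forall_congr fun h => ?_
    simp only [Equiv.coe_mulLeft, mul_smul, Set.mem_smul_set_iff_inv_smul_mem (a := (⟨g, hg⟩ : H))]
    rfl

variable [Fintype α]

theorem exists_uniformSetoid_of_not_isPreprimitive {H : Subgroup (Perm α)} [IsPretransitive H α]
    (hH : ¬ IsPreprimitive H α) : ∃ d ∈ Finset.Ioo 0 (Fintype.card α - 1),
      ∃ r : UniformSetoid α (d + 1), ∀ g ∈ H, g • r = r := by
  obtain ⟨B, hB, hBtriv⟩ : ∃ B : Set α, IsBlock H B ∧ ¬ IsTrivialBlock B := by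
    by_contra! h
    exact hH ⟨fun hB => h _ hB⟩
  obtain ⟨hnontriv, hne⟩ := not_or.mp hBtriv
  rw [Set.not_subsingleton_iff] at hnontriv
  have hlower : 1 < Nat.card B := Finite.one_lt_card_iff_nontrivial.mpr hnontriv.coe_sort
  have hupper : Nat.card B < Nat.card α := Set.ncard_lt_card hne
  rw [Nat.card_eq_fintype_card (α := α)] at hupper
  refine ⟨Nat.card B - 1, Finset.mem_Ioo.mpr ⟨by lia, by lia⟩, ?_⟩
  rw [Nat.sub_add_cancel hlower.le]
  exact exists_uniformSetoid_of_isBlock hB hnontriv.nonempty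

/-- The sum of the reciprocals of the inner entries of the `k`-th row of Pascal's triangle. -/
noncomputable def sumInvChoose (k : ℕ) : ℝ := ∑ i ∈ Finset.Ioo 0 k, 1 / (k.choose i : ℝ)

open scoped Pointwise in
theorem exists_powersetCard_of_not_isPretransitive [DecidableEq α] {H : Subgroup (Perm α)}
    (hH : ¬ IsPretransitive H α) : ∃ i ∈ Finset.Ioo 0 (Fintype.card α),
      ∃ s : Set.powersetCard α i, ∀ g ∈ H, g • s = s := by
  classical
  obtain ⟨a, b, hab⟩ : ∃ a b : α, b ∉ orbit H a := by
    by_contra! h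
    exact hH ⟨h⟩
  let s : Finset α := {x | x ∈ orbit H a}
  have ha : a ∈ s := Finset.mem_filter_univ _ |>.mpr (mem_orbit_self a)
  have hb : b ∉ s := fun h => hab ((Finset.mem_filter_univ _).mp h)
  refine ⟨s.card, Finset.mem_Ioo.mpr ⟨Finset.card_pos.mpr ⟨a, ha⟩,
    Finset.card_lt_univ_of_notMem hb⟩,
    Set.powersetCard.ofCard rfl, fun g hg => Subtype.ext ?_⟩
  rw [Set.powersetCard.coe_smul, Set.powersetCard.val_ofCard]
  ext x
  rw [← Finset.inv_smul_mem_iff, Finset.mem_filter_univ, Finset.mem_filter_univ]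
  change (⟨g, hg⟩ : H)⁻¹ • x ∈ _ ↔ _
  rw [← Set.mem_smul_set_iff_inv_smul_mem, smul_orbit]

theorem prob_exists_uniformSetoid_le {ι : Type*} [Finite ι] [Nontrivial ι] [Nonempty α] {d : ℕ}
    (hd : d ≤ Fintype.card α - 1) :
    prob (fun σ : ι → Perm α => ∃ r : UniformSetoid α (d + 1), ∀ j, σ j • r = r)
      ≤ 1 / ((Fintype.card α - 1).choose d : ℝ) := by
  have := UniformSetoid.isPretransitive (α := α) d.succ_pos
  refine prob_exists_forall_smul_eq_self_le.trans ?_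
  obtain hempty | ⟨⟨r⟩⟩ := isEmpty_or_nonempty (UniformSetoid α (d + 1))
  · rw [Nat.card_of_isEmpty, Nat.cast_zero, div_zero]
    positivity
  · have hpos : (0 : ℝ) < (Fintype.card α - 1).choose d := Nat.cast_pos.mpr (Nat.choose_pos hd)
    gcongr
    rw [← Nat.card_eq_fintype_card]
    exact r.choose_le_card

theorem prob_not_isPreprimitive_closure_le (ι : Type*) [Finite ι] [Nontrivial ι] [Nonempty α] :
    prob (fun σ : ι → Perm α => ¬ IsPreprimitive (Subgroup.closure (Set.range σ)) α)
      ≤ sumInvChoose (Fintype.card α) + sumInvChoose (Fintype.card α - 1) := by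
  classical
  calc prob (fun σ : ι → Perm α => ¬ IsPreprimitive (Subgroup.closure (Set.range σ)) α)
      ≤ prob fun σ : ι → Perm α =>
          (∃ i ∈ Finset.Ioo 0 (Fintype.card α), ∃ s : Set.powersetCard α i, ∀ j, σ j • s = s) ∨
          ∃ d ∈ Finset.Ioo 0 (Fintype.card α - 1),
            ∃ r : UniformSetoid α (d + 1), ∀ j, σ j • r = r := by
        refine prob_mono fun σ hσ => ?_
        have hmem (j : ι) : σ j ∈ Subgroup.closure (Set.range σ) :=
          Subgroup.subset_closure (Set.mem_range_self j)
        by_cases htrans : IsPretransitive (Subgroup.closure (Set.range σ)) α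
        · obtain ⟨d, hd, r, hr⟩ := exists_uniformSetoid_of_not_isPreprimitive hσ
          exact Or.inr ⟨d, hd, r, fun j => hr _ (hmem j)⟩
        · obtain ⟨i, hi, s, hs⟩ := exists_powersetCard_of_not_isPretransitive htrans
          exact Or.inl ⟨i, hi, s, fun j => hs _ (hmem j)⟩
    _ ≤ _ := (prob_or_le _ _).trans (add_le_add (prob_exists_le _ _) (prob_exists_le _ _))
    _ ≤ sumInvChoose (Fintype.card α) + sumInvChoose (Fintype.card α - 1) := by
        refine add_le_add (Finset.sum_le_sum fun i _ => ?_) (Finset.sum_le_sum fun d hd =>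
          prob_exists_uniformSetoid_le (Finset.mem_Ioo.mp hd).2.le)
        have := Set.powersetCard.isPretransitive (α := α) (n := i)
        refine prob_exists_forall_smul_eq_self_le.trans_eq ?_
        rw [Set.powersetCard.card, Nat.card_eq_fintype_card]

end Imprimitive

section SumInvChoose

theorem choose_two_le_choose {k i : ℕ} (hi : 2 ≤ i) (hik : i + 2 ≤ k) :
    k.choose 2 ≤ k.choose i := by
  induction k generalizing i with
  | zero => omega
  | succ k ih =>
    obtain heq | hlt := Nat.eq_or_lt_of_le hik
    · rw [← heq, ← Nat.choose_symm_add]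
    obtain ⟨j, rfl⟩ : ∃ j, i = j + 1 := ⟨i - 1, by omega⟩
    rw [Nat.choose_succ_succ' k j, Nat.choose_succ_succ' k 1]
    refine Nat.add_le_add ?_ (ih hi (by omega))
    obtain rfl | hj := Nat.eq_or_lt_of_le (Nat.le_of_succ_le_succ hi)
    · rfl
    calc k.choose 1 ≤ k.choose 2 := by
          rw [Nat.choose_one_right, Nat.choose_two_right, Nat.le_div_iff_mul_le two_pos]
          exact Nat.mul_le_mul_left k (by omega)
      _ ≤ k.choose j := ih hj (by omega)

theorem sumInvChoose_le {k : ℕ} (hk : 3 ≤ k) : sumInvChoose k ≤ 4 / k := by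
  obtain ⟨m, rfl⟩ := Nat.exists_eq_add_of_le' hk
  have hinner : ∀ i ∈ Finset.Ico 2 (m + 2),
      1 / ((m + 3).choose i : ℝ) ≤ 2 / ((m + 3) * (m + 2)) := by
    intro i hi
    obtain ⟨hi, him⟩ := Finset.mem_Ico.mp hi
    calc 1 / ((m + 3).choose i : ℝ) ≤ 1 / ((m + 3).choose 2 : ℝ) := by
          have hpos : 0 < (m + 3).choose 2 := Nat.choose_pos (by omega)
          have hle := choose_two_le_choose hi (show i + 2 ≤ m + 3 by omega)
          gcongr
      _ = 2 / ((m + 3) * (m + 2)) := by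
          rw [Nat.cast_choose_two, one_div_div]
          push_cast
          ring
  calc sumInvChoose (m + 3)
      = 1 / (m + 3) + ∑ i ∈ Finset.Ico 2 (m + 2), 1 / ((m + 3).choose i : ℝ) + 1 / (m + 3) := by
        rw [sumInvChoose, ← Finset.Ico_add_one_left_eq_Ioo, zero_add,
          Finset.sum_Ico_succ_top (by omega), Finset.sum_eq_sum_Ico_succ_bot (by omega),
          Nat.choose_one_right, Nat.choose_succ_self_right]
        push_cast
        ring
    _ ≤ 1 / (m + 3) + m * (2 / ((m + 3) * (m + 2))) + 1 / (m + 3) := by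
        have := Finset.sum_le_card_nsmul _ _ _ hinner
        rw [Nat.card_Ico, Nat.add_sub_cancel, nsmul_eq_mul] at this
        gcongr
    _ ≤ 4 / (m + 3 : ℕ) := by
        push_cast
        rw [← sub_nonneg]
        field_simp
        linarith

theorem tendsto_sumInvChoose : Tendsto sumInvChoose atTop (𝓝 0) :=
  squeeze_zero' (Eventually.of_forall fun _ => Finset.sum_nonneg fun _ _ => by positivity)
    ((eventually_ge_atTop 3).mono fun _ => sumInvChoose_le)
    (tendsto_const_div_atTop_nhds_zero_nat 4)

end SumInvChoose

section PrimeSums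

theorem eventually_log_le_sqrt : ∀ᶠ x : ℝ in atTop, Real.log x ≤ 1 / 16 * √x := by
  filter_upwards [(isLittleO_log_rpow_atTop (half_pos one_pos)).bound
    (show (0 : ℝ) < 1 / 16 by norm_num), eventually_ge_atTop 1] with x hx hx1
  rwa [← Real.sqrt_eq_rpow, Real.norm_of_nonneg (Real.log_nonneg hx1),
    Real.norm_of_nonneg (Real.sqrt_nonneg _)] at hx

theorem eventually_two_fifths_mul_le_theta :
    ∀ᶠ n : ℕ in atTop, (2 / 5 : ℝ) * n ≤ Chebyshev.theta n := by
  have hlog := eventually_log_le_sqrt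
  filter_upwards [tendsto_natCast_atTop_atTop.eventually hlog,
    (tendsto_atTop_add_const_right _ 1 tendsto_natCast_atTop_atTop).eventually hlog,
    eventually_ge_atTop 1] with n hn hn1 hpos
  have hpos : (1 : ℝ) ≤ n := Nat.one_le_cast.mpr hpos
  have hsqrt : √(n + 1 : ℝ) ≤ n + 1 := Real.sqrt_le_iff.mpr ⟨by positivity, by nlinarith⟩
  calc (2 / 5 : ℝ) * n ≤ n * Real.log 2 - 1 / 16 * (n + 1) - 2 * (1 / 16 * n) := by
        nlinarith [Real.log_two_gt_d9]
    _ ≤ n * Real.log 2 - Real.log (n + 1) - 2 * (√n * Real.log n) := by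
        have : √(n : ℝ) * Real.log n ≤ 1 / 16 * n := by
          calc √(n : ℝ) * Real.log n ≤ √(n : ℝ) * (1 / 16 * √n) := by gcongr
            _ = 1 / 16 * n := by rw [mul_left_comm, Real.mul_self_sqrt (by positivity)]
        gcongr
        exact hn1.trans (by gcongr)
    _ = n * Real.log 2 - Real.log (n + 1) - 2 * √n * Real.log n := by ring
    _ ≤ Chebyshev.theta n := Chebyshev.theta_ge n

/-- The primes `p` with `a < p ≤ b`. -/
def primesIoc (a b : ℕ) : Finset ℕ := (Finset.Ioc a b).filter Nat.Prime

theorem sum_primesIoc_add_sum_primesIoc {a b c : ℕ} (hab : a ≤ b) (hbc : b ≤ c) (f : ℕ → ℝ) :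
    ∑ p ∈ primesIoc a b, f p + ∑ p ∈ primesIoc b c, f p = ∑ p ∈ primesIoc a c, f p := by
  simp only [primesIoc, Finset.sum_filter]
  exact Finset.sum_Ioc_consecutive _ hab hbc

theorem theta_sub_theta {a b : ℕ} (hab : a ≤ b) :
    Chebyshev.theta b - Chebyshev.theta a = ∑ p ∈ primesIoc a b, Real.log p := by
  rw [sub_eq_iff_eq_add', ← Nat.floor_natCast (R := ℝ) a]
  have h := sum_primesIoc_add_sum_primesIoc a.zero_le hab fun p => Real.log p
  simp only [Chebyshev.theta, Nat.floor_natCast]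
  exact h.symm

theorem eventually_le_sum_log_primesIoc :
    ∀ᶠ a : ℕ in atTop, (a : ℝ) ≤ ∑ p ∈ primesIoc a (16 * a), Real.log p := by
  have hmul : Tendsto (fun a : ℕ => 16 * a) atTop atTop :=
    tendsto_id.const_mul_atTop' (by norm_num)
  filter_upwards [hmul.eventually eventually_two_fifths_mul_le_theta] with a hlower
  have hupper : Chebyshev.theta a ≤ Real.log 4 * a :=
    Chebyshev.theta_le_log4_mul_x a.cast_nonneg
  have hlog : Real.log 4 ≤ 7 / 5 := by
    rw [show (4 : ℝ) = 2 ^ 2 by norm_num, Real.log_pow]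
    norm_num
    linarith [Real.log_two_lt_d9]
  rw [← theta_sub_theta (by omega)]
  push_cast at hlower ⊢
  nlinarith [(Nat.cast_nonneg a : (0 : ℝ) ≤ a)]

theorem eventually_le_sum_inv_primesIoc :
    ∀ᶠ a : ℕ in atTop, 1 / (16 * Real.log (16 * a)) ≤ ∑ p ∈ primesIoc a (16 * a), 1 / (p : ℝ) := by
  filter_upwards [eventually_le_sum_log_primesIoc, eventually_ge_atTop 1] with a hsum ha
  have ha : (1 : ℝ) ≤ a := Nat.one_le_cast.mpr ha
  have hlog : 0 < Real.log (16 * a) := Real.log_pos (by linarith)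
  rw [div_le_iff₀ (by positivity)]
  refine le_of_mul_le_mul_left ?_ (show (0 : ℝ) < a by linarith)
  calc (a : ℝ) * 1 ≤ ∑ p ∈ primesIoc a (16 * a), Real.log p := by rwa [mul_one]
    _ ≤ ∑ p ∈ primesIoc a (16 * a), 16 * a * Real.log (16 * a) * (1 / p) := by
        refine Finset.sum_le_sum fun p hp => ?_
        obtain ⟨hpa, hprime⟩ := Finset.mem_filter.mp hp
        have hpos : (0 : ℝ) < p := Nat.cast_pos.mpr hprime.pos
        have hle : (p : ℝ) ≤ 16 * a := by exact_mod_cast (Finset.mem_Ioc.mp hpa).2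
        rw [mul_one_div, le_div_iff₀ hpos, mul_comm]
        gcongr
    _ = _ := by
        rw [← Finset.mul_sum]
        ring

theorem log_sixteen_le : Real.log 16 ≤ 3 := by
  rw [show (16 : ℝ) = 2 ^ 4 by norm_num, Real.log_pow]
  norm_num
  linarith [Real.log_two_lt_d9]

theorem eventually_le_sum_inv_primesIoc_pow : ∀ᶠ j : ℕ in atTop,
    1 / 48 * (1 / (j + 1 : ℝ)) ≤ ∑ p ∈ primesIoc (16 ^ j) (16 ^ (j + 1)), 1 / (p : ℝ) := by
  filter_upwards [(tendsto_pow_atTop_atTop_of_one_lt (show 1 < 16 by norm_num)).eventually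
    eventually_le_sum_inv_primesIoc] with j hj
  rw [pow_succ']
  refine le_trans ?_ hj
  push_cast
  rw [← pow_succ', Real.log_pow, one_div_mul_one_div]
  have : 0 < Real.log 16 := Real.log_pos (by norm_num)
  gcongr 1 / ?_
  push_cast
  nlinarith [log_sixteen_le, (Nat.cast_nonneg j : (0 : ℝ) ≤ j)]

theorem sum_Ico_sum_primesIoc {u : ℕ → ℕ} (hu : Monotone u) {s t : ℕ} (hst : s ≤ t) (f : ℕ → ℝ) :
    ∑ j ∈ Finset.Ico s t, ∑ p ∈ primesIoc (u j) (u (j + 1)), f p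
      = ∑ p ∈ primesIoc (u s) (u t), f p := by
  induction t, hst using Nat.le_induction with
  | base => simp [primesIoc]
  | succ t hst ih =>
    rw [Finset.sum_Ico_succ_top hst, ih,
      sum_primesIoc_add_sum_primesIoc (hu hst) (hu t.le_succ)]

theorem half_log_sub_one_le_sum_Ico_sqrt (n : ℕ) :
    1 / 2 * Real.log n - 1 ≤ ∑ j ∈ Finset.Ico n.sqrt n, 1 / (j + 1 : ℝ) := by
  obtain rfl | hn := Nat.eq_zero_or_pos n
  · simp
  have harmonic_eq (m : ℕ) : ∑ j ∈ Finset.range m, 1 / (j + 1 : ℝ) = harmonic m := by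
    simp [harmonic]
  rw [Finset.sum_Ico_eq_sub _ n.sqrt_le_self, harmonic_eq, harmonic_eq]
  have hupper := harmonic_le_one_add_log n.sqrt
  have hlower : Real.log n ≤ harmonic n :=
    (Real.log_le_log (by positivity) (by push_cast; linarith)).trans (log_add_one_le_harmonic n)
  have hsqrt : 2 * Real.log n.sqrt ≤ Real.log n := by
    have := Nat.sqrt_pos.mpr hn
    rw [← Nat.cast_two, ← Real.log_pow]
    exact Real.log_le_log (by positivity) (by exact_mod_cast n.sqrt_le')
  linarith

theorem tendsto_sum_inv_primesIoc_pow_sqrt :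
    Tendsto (fun n : ℕ => ∑ p ∈ primesIoc (16 ^ n.sqrt) (16 ^ n), 1 / (p : ℝ)) atTop atTop := by
  have hlog : Tendsto (fun n : ℕ => 1 / 48 * (1 / 2 * Real.log n - 1)) atTop atTop :=
    (tendsto_atTop_add_const_right _ _ ((Real.tendsto_log_atTop.comp
      tendsto_natCast_atTop_atTop).const_mul_atTop (by norm_num))).const_mul_atTop (by norm_num)
  obtain ⟨m, hm⟩ := eventually_atTop.mp eventually_le_sum_inv_primesIoc_pow
  refine tendsto_atTop_mono' _ ?_ hlog
  filter_upwards [eventually_ge_atTop (m * m)] with n hn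
  rw [← sum_Ico_sum_primesIoc (pow_right_mono₀ (by norm_num)) n.sqrt_le_self]
  calc 1 / 48 * (1 / 2 * Real.log n - 1)
      ≤ 1 / 48 * ∑ j ∈ Finset.Ico n.sqrt n, 1 / (j + 1 : ℝ) := by
        gcongr
        exact half_log_sub_one_le_sum_Ico_sqrt n
    _ = ∑ j ∈ Finset.Ico n.sqrt n, 1 / 48 * (1 / (j + 1 : ℝ)) := Finset.mul_sum ..
    _ ≤ _ := Finset.sum_le_sum fun j hj =>
        hm j ((Nat.le_sqrt.mpr hn).trans (Finset.mem_Ico.mp hj).1)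

theorem sum_inv_sq_primesIoc_le {a b : ℕ} (ha : a ≠ 0) (hab : a ≤ b) :
    ∑ p ∈ primesIoc a b, 1 / (p : ℝ) ^ 2 ≤ 1 / (a : ℝ) :=
  calc ∑ p ∈ primesIoc a b, 1 / (p : ℝ) ^ 2 ≤ ∑ p ∈ Finset.Ioc a b, 1 / (p : ℝ) ^ 2 :=
        Finset.sum_le_sum_of_subset_of_nonneg (Finset.filter_subset _ _)
          fun _ _ _ => by positivity
    _ ≤ (a : ℝ)⁻¹ - (b : ℝ)⁻¹ := by
        simpa only [one_div] using sum_Ioc_inv_sq_le_sub (α := ℝ) ha hab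
    _ ≤ 1 / (a : ℝ) := by
        rw [one_div, sub_le_self_iff]
        positivity

theorem harmonic_le_of_le_sixteen_pow {k n : ℕ} (hk : k ≤ 16 ^ n) :
    (harmonic k : ℝ) ≤ 1 + 3 * n := by
  calc (harmonic k : ℝ) ≤ harmonic (16 ^ n) := Rat.cast_le.mpr (monotone_harmonic hk)
    _ ≤ 1 + n * Real.log 16 := by
        simpa only [Nat.cast_pow, Nat.cast_ofNat, Real.log_pow] using
          harmonic_le_one_add_log (16 ^ n)
    _ ≤ 1 + 3 * n := by
        rw [mul_comm]
        gcongr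
        exact log_sixteen_le

/-- The primes used to find an isolated cycle in degree `k`. The lower end is chosen to grow faster
than `log k` while `∑ 1 / p` still diverges. -/
def isolatingPrimes (k : ℕ) : Finset ℕ :=
  primesIoc (16 ^ (Nat.log 16 (k / 2)).sqrt) (16 ^ Nat.log 16 (k / 2))

theorem tendsto_natLog_half : Tendsto (fun k : ℕ => Nat.log 16 (k / 2)) atTop atTop :=
  Monotone.tendsto_atTop_atTop (fun _ _ h => Nat.log_mono_right (Nat.div_le_div_right h))
    fun b => ⟨2 * 16 ^ b, by
      rw [Nat.mul_div_cancel_left _ two_pos, Nat.log_pow (by norm_num)]⟩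

theorem tendsto_natSqrt : Tendsto Nat.sqrt atTop atTop :=
  Monotone.tendsto_atTop_atTop (fun _ _ => Nat.sqrt_le_sqrt) fun b => ⟨b * b, b.sqrt_eq.ge⟩

theorem of_mem_isolatingPrimes {k p : ℕ} (hp : p ∈ isolatingPrimes k) :
    p.Prime ∧ p ≠ 2 ∧ 2 * p ≤ k := by
  obtain ⟨hmem, hprime⟩ := Finset.mem_filter.mp hp
  obtain ⟨hlower, hupper⟩ := Finset.mem_Ioc.mp hmem
  have hlog : Nat.log 16 (k / 2) ≠ 0 := by
    intro h
    rw [h] at hlower hupper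
    exact hupper.not_gt hlower
  have hsixteen : 16 ≤ 16 ^ (Nat.log 16 (k / 2)).sqrt :=
    Nat.le_self_pow (Nat.sqrt_pos.mpr (Nat.pos_of_ne_zero hlog)).ne' 16
  have hhalf : 16 ^ Nat.log 16 (k / 2) ≤ k / 2 :=
    Nat.pow_log_le_self 16 fun h => hlog (by rw [h, Nat.log_zero_right])
  exact ⟨hprime, by omega, by omega⟩

theorem tendsto_sum_inv_isolatingPrimes :
    Tendsto (fun k => ∑ p ∈ isolatingPrimes k, 1 / (p : ℝ)) atTop atTop :=
  tendsto_sum_inv_primesIoc_pow_sqrt.comp tendsto_natLog_half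

theorem harmonic_mul_sum_inv_sq_isolatingPrimes_le (k : ℕ) :
    (harmonic k : ℝ) * ∑ p ∈ isolatingPrimes k, 1 / (p : ℝ) ^ 2
      ≤ 160 * ((((Nat.log 16 (k / 2)).sqrt + 1 : ℕ) : ℝ) ^ 2
        / 16 ^ ((Nat.log 16 (k / 2)).sqrt + 1)) := by
  set n := Nat.log 16 (k / 2)
  have hk : k ≤ 16 ^ (n + 2) := by
    have : k / 2 < 16 ^ (n + 1) := Nat.lt_pow_succ_log_self (by norm_num) _
    rw [pow_succ]
    omega
  have hn : (n : ℝ) + 1 ≤ ((n.sqrt + 1 : ℕ) : ℝ) ^ 2 := by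
    exact_mod_cast (Nat.lt_succ_sqrt' n)
  calc (harmonic k : ℝ) * ∑ p ∈ isolatingPrimes k, 1 / (p : ℝ) ^ 2
      ≤ (1 + 3 * (n + 2 : ℕ)) * (1 / (16 ^ n.sqrt : ℕ)) := by
        gcongr
        · exact harmonic_le_of_le_sixteen_pow hk
        · exact sum_inv_sq_primesIoc_le (by positivity)
            (Nat.pow_le_pow_right (by norm_num) n.sqrt_le_self)
    _ ≤ 10 * ((n.sqrt + 1 : ℕ) : ℝ) ^ 2 * (1 / (16 ^ n.sqrt : ℕ)) := by
        gcongr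
        push_cast at hn ⊢
        linarith [(Nat.cast_nonneg n : (0 : ℝ) ≤ n)]
    _ = 160 * (((n.sqrt + 1 : ℕ) : ℝ) ^ 2 / 16 ^ (n.sqrt + 1)) := by
        push_cast
        field_simp
        ring

theorem tendsto_harmonic_mul_sum_inv_sq_isolatingPrimes :
    Tendsto (fun k => (harmonic k : ℝ) * ∑ p ∈ isolatingPrimes k, 1 / (p : ℝ) ^ 2) atTop (𝓝 0) := by
  have hlim : Tendsto (fun s : ℕ => 160 * ((s : ℝ) ^ 2 / 16 ^ s)) atTop (𝓝 0) := by
    simpa only [mul_zero] using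
      (tendsto_pow_const_div_const_pow_of_one_lt 2 (show (1 : ℝ) < 16 by norm_num)).const_mul 160
  refine squeeze_zero (fun k => ?_) harmonic_mul_sum_inv_sq_isolatingPrimes_le
    (hlim.comp ((tendsto_add_atTop_nat 1).comp (tendsto_natSqrt.comp tendsto_natLog_half)))
  exact mul_nonneg (Rat.cast_nonneg.mpr (harmonic_nonneg k))
    (Finset.sum_nonneg fun _ _ => by positivity)

end PrimeSums

section Main

theorem prob_circGen_ne_signGroup_le {n k : ℕ} (hn : 2 ≤ n) {P : Finset ℕ}
    (hP : ∀ p ∈ P, p.Prime ∧ p ≠ 2 ∧ 2 * p ≤ k) (hpos : 0 < ∑ p ∈ P, 1 / (p : ℝ)) :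
    prob (fun σ : Fin n → Perm (Fin k) => circGen σ ≠ signGroup σ)
      ≤ 1 / ∑ p ∈ P, 1 / (p : ℝ) + n * (harmonic k * ∑ p ∈ P, 1 / (p : ℝ) ^ 2)
        + (sumInvChoose k + sumInvChoose (k - 1)) := by
  have : NeZero n := ⟨by lia⟩
  have : Nontrivial (Fin n) := Fin.nontrivial_iff_two_le.mpr hn
  have : NeZero k := ⟨fun hk => by
    obtain ⟨p, hp⟩ := Finset.nonempty_of_sum_ne_zero hpos.ne'
    have := (hP p hp).1.pos
    have := (hP p hp).2.2
    lia⟩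
  have hlen : ∀ p ∈ P, 2 ≤ p ∧ p ≤ Fintype.card (Fin k) := fun p hp => by
    rw [Fintype.card_fin]
    exact ⟨(hP p hp).1.two_le, by linarith [(hP p hp).2.2]⟩
  calc prob (fun σ : Fin n → Perm (Fin k) => circGen σ ≠ signGroup σ)
      ≤ prob fun σ : Fin n → Perm (Fin k) => ((∀ p ∈ P, p ∉ (σ 0).cycleType) ∨
          ∃ p ∈ P, p ∈ (σ 0).cycleType ∧ 1 < ∑ j, (σ j).cycleType.countP (p ∣ ·)) ∨
          ¬ IsPreprimitive (Subgroup.closure (Set.range σ)) (Fin k) := by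
        refine prob_mono fun σ hσ => ?_
        contrapose! hσ
        obtain ⟨⟨⟨p, hpP, hmem⟩, hone⟩, hprim⟩ := hσ
        obtain ⟨hp, hp2, hpk⟩ := hP p hpP
        exact circGen_eq_signGroup_of_isolated hprim hp hp2 hpk hmem (hone p hpP hmem)
    _ ≤ _ := (prob_or_le _ _).trans (add_le_add_left (prob_or_le _ _) _)
    _ ≤ _ := by
        gcongr
        · rw [prob_eval 0 fun g : Perm (Fin k) => ∀ p ∈ P, p ∉ g.cycleType]
          exact prob_forall_notMem_cycleType_le hlen hpos
        · refine (prob_exists_le _ _).trans ?_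
          rw [Finset.mul_sum, Finset.mul_sum]
          refine Finset.sum_le_sum fun p hp => ?_
          simpa only [Fintype.card_fin, mul_one_div] using
            prob_mem_cycleType_and_one_lt_sum_countP_le (α := Fin k) (0 : Fin n) (hP p hp).1.two_le
        · simpa only [Fintype.card_fin] using
            prob_not_isPreprimitive_closure_le (α := Fin k) (Fin n)

theorem tendsto_prob_circGen_ne_signGroup {n : ℕ} (hn : 2 ≤ n) :
    Tendsto (fun k : ℕ => prob fun σ : Fin n → Perm (Fin k) => circGen σ ≠ signGroup σ)
      atTop (𝓝 0) := by
  have hlim := ((tendsto_sum_inv_isolatingPrimes.const_div_atTop 1).add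
    (tendsto_harmonic_mul_sum_inv_sq_isolatingPrimes.const_mul (n : ℝ))).add
    (tendsto_sumInvChoose.add (tendsto_sumInvChoose.comp (tendsto_sub_atTop_nat 1)))
  simp only [mul_zero, add_zero] at hlim
  refine squeeze_zero' (Eventually.of_forall fun k => div_nonneg (by positivity) (by positivity))
    ?_ hlim
  filter_upwards [tendsto_sum_inv_isolatingPrimes.eventually_gt_atTop 0] with k hk
  exact prob_circGen_ne_signGroup_le hn (fun p hp => of_mem_isolatingPrimes hp) hk

end Main

/-- The group circularly generated by `n` uniformly random permutations of `k` points
generically equals `A_k^n ⋊ ⟨c sgn_π(σ_0, …, σ_{n−1})⟩`. -/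
theorem circGen_eq_signGroup_probability (n : ℕ) (hn : 2 ≤ n) :
    Filter.Tendsto
      (fun k : ℕ =>
        (Nat.card {σ : Fin n → Equiv.Perm (Fin k) // circGen σ = signGroup σ} : ℝ) /
          (Nat.factorial k : ℝ) ^ n)
      Filter.atTop (nhds 1) := by
  have hcard (k : ℕ) : (Nat.card (Fin n → Perm (Fin k)) : ℝ) = (k.factorial : ℝ) ^ n := by
    simp [Fintype.card_perm]
  have hlim := (tendsto_prob_circGen_ne_signGroup hn).const_sub 1
  rw [sub_zero] at hlim
  refine hlim.congr fun k => ?_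
  rw [prob_not, sub_sub_cancel, prob, hcard]
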